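/- arXiv:2104.11851 — 4 statements merged into one kernel-verified Lean document; each statement's English description precedes it below -/
import Mathlib

section
/- Let D ⊆ ℂ be an open connected set, H a complex Hilbert space, and F : D → L(H) an analytic operator-valued function such that F(λ) is a compact operator for every λ ∈ D. Then at least one of the following holds: (1) Id − F(λ) is boundedly invertible for no λ ∈ D; or (2) there exists a subset S ⊆ D with no accumulation point in D such that Id − F(λ) is boundedly invertible for every λ ∈ D \ S. -/
open Filter Topology

/-!
Each `1 - F z₀` is Fredholm: a compact operator is small on a closed subspace of finite codimension,
where `1 - F z₀` is therefore bounded below, and the quotient by its range is finite dimensional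
because the quotient map is compact.

A Fredholm operator `A = G z₀` becomes invertible after bordering it with finite-dimensional spaces,
`P z₀ = [[G z₀, B], [C, 0]]`. The operator `P z` stays invertible for `z` near `z₀`, and `G z` is
bijective exactly when the complementary block `M z` of `(P z)⁻¹`, a map between finite-dimensional
spaces depending analytically on `z`, is. The zeros of `det (M z)` are isolated unless `det (M z)`
vanishes near `z₀`. Both local behaviours are open conditions, so on a connected set one of them
holds everywhere.
-/

section Codiscrete

variable {X : Type*} [TopologicalSpace X]

lemma exists_exceptional_set_of_mem_codiscreteWithin {s D : Set X}
    (hs : s ∈ codiscreteWithin D) :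
    ∃ S ⊆ D, (∀ x ∈ D, ∃ U ∈ 𝓝 x, U ∩ S ⊆ {x}) ∧ ∀ x ∈ D, x ∉ S → x ∈ s := by
  refine ⟨D \ s, Set.sdiff_subset, fun x hx ↦ ?_, fun x hx hxs ↦ by_contra fun h ↦ hxs ⟨hx, h⟩⟩
  have hU := mem_codiscreteWithin_iff_forall_mem_nhdsNE.1 hs x hx
  refine ⟨_, mem_nhdsWithin_iff_eventually.1 hU, fun y ⟨hyU, hyD, hys⟩ ↦ ?_⟩
  by_contra hyx
  exact (hyU hyx).elim hys fun h ↦ h hyD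

lemma forall_not_or_mem_codiscreteWithin_of_isPreconnected [T1Space X] [∀ x : X, (𝓝[≠] x).NeBot]
    {D : Set X} (hD : IsPreconnected D) {p : X → Prop}
    (h : ∀ x ∈ D, (∀ᶠ y in 𝓝 x, ¬ p y) ∨ ∀ᶠ y in 𝓝[≠] x, p y) :
    (∀ x ∈ D, ¬ p x) ∨ {x | p x} ∈ codiscreteWithin D := by
  have hdisj : Disjoint {x | ∀ᶠ y in 𝓝 x, ¬ p y} {x | ∀ᶠ y in 𝓝[≠] x, p y} :=
    Set.disjoint_left.2 fun x hnot hp ↦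
      let ⟨_, hny, hy⟩ := ((hnot.filter_mono nhdsWithin_le_nhds).and hp).exists
      hny hy
  refine (hD.subset_or_subset isOpen_setOfPred_eventually_nhds
    isOpen_setOfPred_eventually_nhdsWithin hdisj h).imp
    (fun hsub x hx ↦ (hsub hx).self_of_nhds) fun hsub ↦ ?_
  exact mem_codiscreteWithin_iff_forall_mem_nhdsNE.2 fun x hx ↦
    mem_of_superset (hsub hx) Set.subset_union_left

end Codiscrete

section ComplementaryBlocks

variable {A B C D : Type*} [AddGroup A] [AddGroup B] [AddGroup C] [AddGroup D]

lemma bijective_fst_of_bijective_snd_symm (e : A × B ≃+ C × D)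
    (h : Function.Bijective fun d : D ↦ (e.symm (0, d)).2) :
    Function.Bijective fun a : A ↦ (e (a, 0)).1 := by
  constructor
  · refine (injective_iff_map_eq_zero
      ((AddMonoidHom.fst C D).comp (e.toAddMonoidHom.comp (AddMonoidHom.inl A B)))).2 fun a ha ↦ ?_
    replace ha : (e (a, 0)).1 = 0 := ha
    have hsymm : e.symm (0, (e (a, 0)).2) = (a, 0) := by
      rw [AddEquiv.symm_apply_eq, ← ha]
    have hsnd : (e (a, 0)).2 = 0 := h.1 <| by
      simp only [hsymm, Prod.mk_zero_zero, map_zero, Prod.snd_zero]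
    rw [hsnd, Prod.mk_zero_zero, map_zero] at hsymm
    exact (congrArg Prod.fst hsymm).symm
  · intro c
    obtain ⟨d, hd⟩ := h.2 (e.symm (c, 0)).2
    have hsub : ((e.symm (c, 0) - e.symm (0, d)).1, (0 : B)) = e.symm (c, 0) - e.symm (0, d) :=
      Prod.ext rfl (by simp [← hd])
    refine ⟨(e.symm (c, 0) - e.symm (0, d)).1, ?_⟩
    beta_reduce
    rw [hsub, map_sub, e.apply_symm_apply, e.apply_symm_apply, Prod.fst_sub, sub_zero]

lemma bijective_fst_iff_bijective_snd_symm (e : A × B ≃+ C × D) :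
    (Function.Bijective fun a : A ↦ (e (a, 0)).1) ↔
      Function.Bijective fun d : D ↦ (e.symm (0, d)).2 :=
  ⟨bijective_fst_of_bijective_snd_symm
    ((AddEquiv.prodComm.trans e.symm).trans AddEquiv.prodComm),
    bijective_fst_of_bijective_snd_symm e⟩

end ComplementaryBlocks

lemma linearMap_det_ne_zero_iff_bijective {K V : Type*} [Field K] [AddCommGroup V] [Module K V]
    [FiniteDimensional K V] {f : V →ₗ[K] V} : LinearMap.det f ≠ 0 ↔ Function.Bijective f := by
  rw [← isUnit_iff_ne_zero, ← LinearMap.isUnit_iff_isUnit_det, Module.End.isUnit_iff]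

section FiniteDimensional

open scoped ContDiff

variable {𝕜 : Type*} [NontriviallyNormedField 𝕜] [CompleteSpace 𝕜]
  {V W : Type*} [NormedAddCommGroup V] [NormedSpace 𝕜 V] [FiniteDimensional 𝕜 V]
  [NormedAddCommGroup W] [NormedSpace 𝕜 W]

lemma contDiff_clm_det {n : ℕ∞ω} : ContDiff 𝕜 n fun f : V →L[𝕜] V ↦ f.det := by
  let b := Module.finBasis 𝕜 V
  have hentry (i j) : ContDiff 𝕜 n fun f : V →L[𝕜] V ↦ b.coord i (f (b j)) :=
    (LinearMap.toContinuousLinearMap (b.coord i) ∘L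
      ContinuousLinearMap.apply 𝕜 V (b j)).contDiff
  simp_rw [ContinuousLinearMap.det, ← LinearMap.det_toMatrix b, Matrix.det_apply',
    LinearMap.toMatrix_apply]
  exact ContDiff.sum fun σ _ ↦ contDiff_const.mul (contDiff_prod fun i _ ↦ hentry _ _)

lemma eventually_not_bijective_or_eventually_bijective_of_finiteDimensional
    [FiniteDimensional 𝕜 W] {M : 𝕜 → V →L[𝕜] W} {z₀ : 𝕜} (hM : AnalyticAt 𝕜 M z₀) :
    (∀ᶠ z in 𝓝 z₀, ¬ Function.Bijective (M z)) ∨ ∀ᶠ z in 𝓝[≠] z₀, Function.Bijective (M z) := by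
  by_cases hdim : Module.finrank 𝕜 V = Module.finrank 𝕜 W
  · let e : W ≃L[𝕜] V := (ContinuousLinearEquiv.ofFinrankEq hdim).symm
    have := FiniteDimensional.complete 𝕜 V
    have := FiniteDimensional.complete 𝕜 W
    have hdet : AnalyticAt 𝕜 (fun z ↦ ((e : W →L[𝕜] V) ∘L M z).det) z₀ :=
      (contDiff_clm_det.contDiffAt.comp z₀
        (contDiffAt_const.clm_comp hM.contDiffAt)).analyticAt
    have hbij (z : 𝕜) : Function.Bijective (M z) ↔ ((e : W →L[𝕜] V) ∘L M z).det ≠ 0 := by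
      rw [ContinuousLinearMap.det, linearMap_det_ne_zero_iff_bijective]
      exact (Function.Bijective.of_comp_iff' e.bijective _).symm
    simp only [hbij, not_not]
    exact hdet.eventually_eq_zero_or_eventually_ne_zero
  · exact .inl <| .of_forall fun z hz ↦
      hdim (LinearEquiv.ofBijective (M z).toLinearMap hz).finrank_eq

end FiniteDimensional

section Bordered

open scoped ContDiff

variable {𝕜 : Type*} [NontriviallyNormedField 𝕜]
  {E F E₀ F₀ : Type*} [NormedAddCommGroup E] [NormedSpace 𝕜 E]
  [NormedAddCommGroup F] [NormedSpace 𝕜 F]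
  [NormedAddCommGroup E₀] [NormedSpace 𝕜 E₀] [NormedAddCommGroup F₀] [NormedSpace 𝕜 F₀]

/-- The bordering of an operator `A` (Grushin problem), with block matrix `[[A, B], [C, 0]]`. For
suitable finite-dimensional `E₀` and `F₀` it turns a Fredholm operator into an invertible one. -/
def borderedCLM (A : E →L[𝕜] F) (B : F₀ →L[𝕜] F) (C : E →L[𝕜] E₀) : E × F₀ →L[𝕜] F × E₀ :=
  (A.coprod B).prod (C ∘L ContinuousLinearMap.fst 𝕜 E F₀)

lemma borderedCLM_apply (A : E →L[𝕜] F) (B : F₀ →L[𝕜] F) (C : E →L[𝕜] E₀) (x : E × F₀) :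
    borderedCLM A B C x = (A x.1 + B x.2, C x.1) :=
  rfl

lemma contDiff_borderedCLM (B : F₀ →L[𝕜] F) (C : E →L[𝕜] E₀) {n : ℕ∞ω} :
    ContDiff 𝕜 n fun A : E →L[𝕜] F ↦ borderedCLM A B C := by
  have haffine : (fun A : E →L[𝕜] F ↦ borderedCLM A B C) = fun A ↦
      ContinuousLinearMap.inl 𝕜 F E₀ ∘L A ∘L ContinuousLinearMap.fst 𝕜 E F₀ +
        borderedCLM 0 B C := by
    ext A x <;> simp [borderedCLM_apply]
  rw [haffine]
  exact (contDiff_const.clm_comp (contDiff_id.clm_comp contDiff_const)).add contDiff_const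

lemma exists_bijective_borderedCLM [CompleteSpace 𝕜] {A : E →L[𝕜] F} (hA : A.IsFredholm) :
    ∃ (E₀ : Submodule 𝕜 E) (F₀ : Submodule 𝕜 F) (B : F₀ →L[𝕜] F) (C : E →L[𝕜] E₀),
      FiniteDimensional 𝕜 E₀ ∧ FiniteDimensional 𝕜 F₀ ∧
        Function.Bijective (borderedCLM A B C) := by
  obtain ⟨p, hp⟩ := hA.closedComplemented_ker
  obtain ⟨W, hW⟩ := hA.closedComplemented_range.exists_isTopCompl
  refine ⟨A.ker, W, W.subtypeL, p, hA.finite_ker,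
    .of_fg (hA.finite_coker.fg_of_isCompl hW.isCompl), ?_, ?_⟩
  · refine (injective_iff_map_eq_zero _).2 fun ⟨x, w⟩ hxw ↦ ?_
    obtain ⟨hsum : A x + w = 0, hpx : p x = 0⟩ := Prod.mk.inj hxw
    have hw : (w : F) = 0 := Submodule.disjoint_def.1 hW.isCompl.disjoint w
      ⟨-x, by rw [map_neg]; exact neg_eq_of_add_eq_zero_right hsum⟩ w.2
    have hAx : A x = 0 := by rwa [hw, add_zero] at hsum
    have hx : x = 0 := by
      simpa only [hpx, ZeroMemClass.coe_zero] using congrArg Subtype.val (hp ⟨x, hAx⟩).symm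
    exact Prod.ext hx (Subtype.ext hw)
  · intro ⟨y, k⟩
    obtain ⟨_, ⟨x, rfl⟩, w, hw, rfl⟩ :=
      Submodule.mem_sup.1 (hW.isCompl.sup_eq_top ▸ Submodule.mem_top (x := y))
    have hAker (v : A.ker) : A v = 0 := v.2
    exact ⟨(x - p x + k, ⟨w, hw⟩), by simp [borderedCLM_apply, hAker, hp]⟩

lemma bijective_iff_bijective_inverse_borderedCLM {A : E →L[𝕜] F} {B : F₀ →L[𝕜] F}
    {C : E →L[𝕜] E₀} (h : (borderedCLM A B C).IsInvertible) :
    Function.Bijective A ↔ Function.Bijective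
      (ContinuousLinearMap.snd 𝕜 E F₀ ∘L (borderedCLM A B C).inverse ∘L
        ContinuousLinearMap.inr 𝕜 F E₀) := by
  obtain ⟨e, he⟩ := h
  have hblock : (fun x ↦ (e (x, 0)).1) = A := by
    ext x
    rw [← ContinuousLinearEquiv.coe_coe, he, borderedCLM_apply, map_zero, add_zero]
  rw [← he, ContinuousLinearMap.inverse_equiv, ← hblock]
  exact bijective_fst_iff_bijective_snd_symm e.toLinearEquiv.toAddEquiv

end Bordered

section FredholmFamily

variable {𝕜 : Type*} [NontriviallyNormedField 𝕜] [CompleteSpace 𝕜]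
  {E F : Type*} [NormedAddCommGroup E] [NormedSpace 𝕜 E] [CompleteSpace E]
  [NormedAddCommGroup F] [NormedSpace 𝕜 F] [CompleteSpace F]

lemma eventually_not_bijective_or_eventually_bijective_of_isFredholm {G : 𝕜 → E →L[𝕜] F} {z₀ : 𝕜}
    (hG : AnalyticAt 𝕜 G z₀) (hfred : (G z₀).IsFredholm) :
    (∀ᶠ z in 𝓝 z₀, ¬ Function.Bijective (G z)) ∨ ∀ᶠ z in 𝓝[≠] z₀, Function.Bijective (G z) := by
  obtain ⟨E₀, F₀, B, C, _, _, hbij⟩ := exists_bijective_borderedCLM hfred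
  have := FiniteDimensional.complete 𝕜 E₀
  have := FiniteDimensional.complete 𝕜 F₀
  let e := ContinuousLinearEquiv.ofBijective (borderedCLM (G z₀) B C)
    (LinearMap.ker_eq_bot.2 hbij.1) (LinearMap.range_eq_top.2 hbij.2)
  have he : (borderedCLM (G z₀) B C).IsInvertible := ⟨e, rfl⟩
  have hP : AnalyticAt 𝕜 (fun z ↦ borderedCLM (G z) B C) z₀ :=
    ((contDiff_borderedCLM B C).contDiffAt.comp z₀ hG.contDiffAt).analyticAt
  have hM : AnalyticAt 𝕜 (fun z ↦ ContinuousLinearMap.snd 𝕜 E F₀ ∘L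
      (borderedCLM (G z) B C).inverse ∘L ContinuousLinearMap.inr 𝕜 F E₀) z₀ :=
    (contDiffAt_const.clm_comp
      ((he.contDiffAt_map_inverse.comp z₀ hP.contDiffAt).clm_comp contDiffAt_const)).analyticAt
  have hiff := (hP.continuousAt.eventually e.nhds).mono fun z ↦
    bijective_iff_bijective_inverse_borderedCLM
  refine (eventually_not_bijective_or_eventually_bijective_of_finiteDimensional hM).imp
    (fun h ↦ (hiff.and h).mono fun z hz ↦ hz.1.not.2 hz.2) fun h ↦ ?_
  exact ((hiff.filter_mono nhdsWithin_le_nhds).and h).mono fun z hz ↦ hz.1.2 hz.2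

theorem forall_not_bijective_or_bijective_mem_codiscreteWithin {D : Set 𝕜}
    (hD : IsPreconnected D) {G : 𝕜 → E →L[𝕜] F} (hG : AnalyticOnNhd 𝕜 G D)
    (hfred : ∀ z ∈ D, (G z).IsFredholm) :
    (∀ z ∈ D, ¬ Function.Bijective (G z)) ∨
      {z | Function.Bijective (G z)} ∈ codiscreteWithin D :=
  forall_not_or_mem_codiscreteWithin_of_isPreconnected hD fun z hz ↦
    eventually_not_bijective_or_eventually_bijective_of_isFredholm (hG z hz) (hfred z hz)

end FredholmFamily

section Compact

lemma finiteDimensional_of_isCompactOperator_of_isOpenMap {𝕜 E F : Type*}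
    [NontriviallyNormedField 𝕜] [CompleteSpace 𝕜] [AddCommGroup E] [Module 𝕜 E]
    [TopologicalSpace E] [AddCommGroup F] [Module 𝕜 F] [TopologicalSpace F] [T2Space F]
    [IsTopologicalAddGroup F] [ContinuousSMul 𝕜 F] {f : E →ₗ[𝕜] F} (hf : IsCompactOperator f)
    (hopen : IsOpenMap f) : FiniteDimensional 𝕜 F := by
  obtain ⟨C, hC, hfC⟩ := hf
  have himage : f '' (f ⁻¹' C) ∈ 𝓝 0 := map_zero f ▸ hopen.image_mem_nhds hfC
  exact .of_isCompactOperator_id ⟨C, hC, mem_of_superset himage (Set.image_preimage_subset f C)⟩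

lemma coFG_range_one_sub_of_isCompactOperator {𝕜 E : Type*} [NontriviallyNormedField 𝕜]
    [CompleteSpace 𝕜] [NormedAddCommGroup E] [NormedSpace 𝕜 E] {K : E →L[𝕜] E}
    (hK : IsCompactOperator K) (hclosed : IsClosed ((1 - K).range : Set E)) :
    (1 - K).range.CoFG := by
  let q : E →L[𝕜] E ⧸ (1 - K).range := (1 - K).range.mkQL
  have hqK : q ∘ K = q := funext fun x ↦
    ((Submodule.Quotient.eq _).2 (LinearMap.mem_range.2 ⟨x, rfl⟩)).symm
  exact finiteDimensional_of_isCompactOperator_of_isOpenMap (f := (1 - K).range.mkQ)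
    (hqK ▸ hK.clm_comp q) (1 - K).range.isOpenQuotientMap_mkQL.isOpenMap

variable {𝕜 E F : Type*} [RCLike 𝕜] [NormedAddCommGroup E] [NormedSpace 𝕜 E]
  [NormedAddCommGroup F] [NormedSpace 𝕜 F]

-- `M` is cut out by functionals norming the points `y` of a finite net of the image of the ball:
-- if `g y (K x) = 0`, then `‖y‖ = |g y (y - K x)|` is as small as `‖y - K x‖`.
lemma exists_coFG_opNorm_domRestrict_le {K : E →L[𝕜] F} (hK : IsCompactOperator K) {ε : ℝ}
    (hε : 0 < ε) :
    ∃ M : Submodule 𝕜 E, IsClosed (M : Set E) ∧ M.CoFG ∧ ‖K.domRestrict M‖ ≤ ε := by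
  have hc := IsCompactOperator.isCompact_closure_image_closedBall (f := (K : E →ₗ[𝕜] F)) hK 1
  obtain ⟨t, ht, htc⟩ := Metric.totallyBounded_iff.1 hc.totallyBounded (ε / 2) (half_pos hε)
  have := ht.to_subtype
  choose g hgnorm hg using exists_dual_vector'' 𝕜 (E := F)
  let Φ : E →L[𝕜] (t → 𝕜) := ContinuousLinearMap.pi fun y ↦ g y ∘L K
  refine ⟨Φ.ker, Φ.isClosed_ker, Submodule.CoFG.ker _,
    ContinuousLinearMap.opNorm_le_of_unit_norm (𝕜 := 𝕜) hε.le fun ⟨x, hxΦ⟩ hx ↦ ?_⟩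
  have hmem : K x ∈ closure ((K : E →ₗ[𝕜] F) '' Metric.closedBall 0 1) :=
    subset_closure ⟨x, mem_closedBall_zero_iff.2 hx.le, rfl⟩
  obtain ⟨y, hy, hxy⟩ := Set.mem_iUnion₂.1 (htc hmem)
  rw [mem_ball_iff_norm'] at hxy
  have hgy : g y (K x) = 0 := congrFun hxΦ ⟨y, hy⟩
  have hynorm : ‖y‖ ≤ ‖y - K x‖ :=
    calc ‖y‖ = ‖g y (y - K x)‖ := by rw [map_sub, hgy, sub_zero, hg, RCLike.norm_ofReal, abs_norm]
      _ ≤ 1 * ‖y - K x‖ := (g y).le_of_opNorm_le (hgnorm y) _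
      _ = ‖y - K x‖ := one_mul _
  calc ‖K x‖ = ‖y - (y - K x)‖ := by rw [sub_sub_cancel]
    _ ≤ ‖y‖ + ‖y - K x‖ := norm_sub_le _ _
    _ ≤ ε := by linarith

variable [CompleteSpace E]

lemma isFredholm_one_sub_of_isCompactOperator {K : E →L[𝕜] E} (hK : IsCompactOperator K) :
    (1 - K).IsFredholm := by
  obtain ⟨M, hMclosed, hM, hnorm⟩ := exists_coFG_opNorm_domRestrict_le hK (half_pos one_pos)
  have hanti : AntilipschitzWith 2 ((1 - K).domRestrict M) := by
    refine AddMonoidHomClass.antilipschitz_of_bound _ fun x ↦ ?_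
    have hKx : ‖K x‖ ≤ 1 / 2 * ‖(x : E)‖ := (K.domRestrict M).le_of_opNorm_le hnorm x
    have hx : ‖(x : E)‖ ≤ ‖(x : E) - K x‖ + ‖K x‖ := norm_le_norm_sub_add (x : E) (K x)
    rw [NNReal.coe_ofNat]
    change ‖(x : E)‖ ≤ 2 * ‖(x : E) - K x‖
    linarith
  have hdisj : Disjoint M (1 - K).ker := by
    rw [Submodule.disjoint_iff_comap_eq_bot, ← LinearMap.ker_domRestrict]
    exact LinearMap.ker_eq_bot.2 hanti.injective
  have := hMclosed.completeSpace_coe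
  have hemb := hanti.isClosedEmbedding ((1 - K).domRestrict M).uniformContinuous
  obtain ⟨hstrict, hrange⟩ := ((1 - K).isStrictMap_isClosed_range_iff_restrict M hMclosed).2
    ⟨hemb.isEmbedding.isStrictMap, hemb.isClosed_range⟩
  exact
    { isStrictMap := hstrict
      isClosed_range := hrange
      finite_ker := .of_fg (hM.fg_of_disjoint hdisj.symm)
      finite_coker := coFG_range_one_sub_of_isCompactOperator hK hrange
      closedComplemented_ker := .of_disjoint_of_finiteDimensional_quotient hMclosed hdisj.symm }

theorem analytic_fredholm_dichotomy_general {D : Set 𝕜} (hD : IsPreconnected D)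
    {F : 𝕜 → E →L[𝕜] E} (hF : AnalyticOnNhd 𝕜 F D) (hK : ∀ z ∈ D, IsCompactOperator (F z)) :
    (∀ z ∈ D, ¬ IsUnit (1 - F z)) ∨
      (∃ S : Set 𝕜, S ⊆ D ∧ (∀ z ∈ D, ∃ U ∈ 𝓝 z, U ∩ S ⊆ {z}) ∧
        ∀ z ∈ D, z ∉ S → IsUnit (1 - F z)) := by
  simp only [ContinuousLinearMap.isUnit_iff_bijective]
  exact (forall_not_bijective_or_bijective_mem_codiscreteWithin hD (analyticOnNhd_const.sub hF)
    fun z hz ↦ isFredholm_one_sub_of_isCompactOperator (hK z hz)).imp_right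
    exists_exceptional_set_of_mem_codiscreteWithin

end Compact

/-- Analytic Fredholm theorem (Reed–Simon, Theorem VI.14), dichotomy form:
for an analytic family `F` of compact operators on a complex Hilbert space `H`,
defined on an open connected set `D ⊆ ℂ`, either `Id - F λ` is invertible for no
`λ ∈ D`, or it is invertible for all `λ ∈ D` outside a set with no accumulation
point in `D`. -/
theorem analytic_fredholm_dichotomy
    {H : Type*} [NormedAddCommGroup H] [InnerProductSpace ℂ H] [CompleteSpace H]
    (D : Set ℂ) (hDopen : IsOpen D) (hDconn : IsConnected D)
    (F : ℂ → H →L[ℂ] H) (hFanalytic : AnalyticOnNhd ℂ F D)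
    (hFcompact : ∀ z ∈ D, IsCompactOperator (F z)) :
    (∀ z ∈ D, ¬ IsUnit (1 - F z)) ∨
      (∃ S : Set ℂ, S ⊆ D ∧ (∀ z ∈ D, ∃ U ∈ 𝓝 z, U ∩ S ⊆ {z}) ∧
        ∀ z ∈ D, z ∉ S → IsUnit (1 - F z)) :=
  analytic_fredholm_dichotomy_general hDconn.isPreconnected hFanalytic hFcompact
end

section
/- Let D ⊆ ℂ be an open connected set, H a complex Hilbert space, and F : D → L(H) an analytic operator-valued function such that F(λ) is a compact operator for every λ ∈ D. Suppose there exists λ₀ ∈ D such that Id − F(λ₀) is boundedly invertible. Then the set S := {λ ∈ D : Id − F(λ) is not boundedly invertible} has no accumulation point in D, and the map λ ↦ (Id − F(λ))⁻¹ is analytic on D \ S. -/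
open Filter Topology

/-!
Near a point `z₁ ∈ D` the invertibility of `1 - F z` is governed by one scalar analytic function.
Since `F z₁` is compact, Riesz's theory provides a finite-rank `R` such that `1 - F z₁ + R` is
invertible: as long as `1 - F z₁` is neither injective nor surjective, a rank-one correction lowers
the dimension of its kernel. Then `A z = 1 - F z + R` is invertible for `z` near `z₁`, and
`1 - F z = A z (1 - (A z)⁻¹ R)` is invertible exactly when the endomorphism of the range of `R`
induced by `1 - R (A z)⁻¹` has nonzero determinant.

Since zeros of analytic functions are isolated, each point of `D` has either a neighborhood on which
`1 - F z` is never invertible, or a punctured neighborhood on which it always is. Both conditions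
are open and they exclude each other, so connectedness of `D` and the point `z₀` leave only the
second. Analyticity of the inverse is analyticity of inversion in a Banach algebra.
-/

section Jacobson

variable {R E G : Type*} [Ring R]
  [TopologicalSpace E] [AddCommGroup E] [IsTopologicalAddGroup E] [Module R E]
  [TopologicalSpace G] [AddCommGroup G] [IsTopologicalAddGroup G] [Module R G]

lemma isUnit_one_sub_comp_of_swap {A : E →L[R] G} {B : G →L[R] E}
    (h : IsUnit (1 - B ∘L A)) : IsUnit (1 - A ∘L B) := by
  obtain ⟨C, hright, hleft⟩ := isUnit_iff_exists.1 h
  -- Formally `(1 - AB)⁻¹ = 1 + AB + ABAB + ⋯ = 1 + A (1 - BA)⁻¹ B`.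
  refine isUnit_iff_exists.2 ⟨1 + A ∘L C ∘L B, ?_, ?_⟩
  · have hC : C - B ∘L A ∘L C = 1 := by simpa [sub_mul] using! hright
    calc (1 - A ∘L B) * (1 + A ∘L C ∘L B)
        = 1 - A ∘L B + A ∘L (C - B ∘L A ∘L C) ∘L B := by
          ext x; simp; abel
      _ = 1 := by rw [hC]; ext x; simp
  · have hC : C - C ∘L B ∘L A = 1 := by simpa [mul_sub] using! hleft
    calc (1 + A ∘L C ∘L B) * (1 - A ∘L B)
        = 1 - A ∘L B + A ∘L (C - C ∘L B ∘L A) ∘L B := by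
          ext x; simp
      _ = 1 := by rw [hC]; ext x; simp

lemma isUnit_one_sub_comp_comm (A : E →L[R] G) (B : G →L[R] E) :
    IsUnit (1 - A ∘L B) ↔ IsUnit (1 - B ∘L A) :=
  ⟨isUnit_one_sub_comp_of_swap, isUnit_one_sub_comp_of_swap⟩

end Jacobson

section DeterminantCriterion

variable {𝕜 E V : Type*} [NontriviallyNormedField 𝕜] [CompleteSpace 𝕜]
  [TopologicalSpace E] [AddCommGroup E] [IsTopologicalAddGroup E] [Module 𝕜 E]
  [NormedAddCommGroup V] [NormedSpace 𝕜 V] [FiniteDimensional 𝕜 V]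

lemma isUnit_iff_det_ne_zero (T : V →L[𝕜] V) : IsUnit T ↔ T.det ≠ 0 := by
  rw [← isUnit_iff_ne_zero, ContinuousLinearMap.det, ← LinearMap.isUnit_iff_isUnit_det,
    ← MulEquiv.isUnit_map (Module.End.toContinuousLinearMap V)]
  rfl

lemma isUnit_sub_comp_iff_det_ne_zero {A : E →L[𝕜] E} (hA : IsUnit A)
    (ι : V →L[𝕜] E) (ρ : E →L[𝕜] V) :
    IsUnit (A - ι ∘L ρ) ↔ (1 - ρ ∘L Ring.inverse A ∘L ι).det ≠ 0 := by
  have hfactor : A - ι ∘L ρ = A * (1 - (Ring.inverse A ∘L ι) ∘L ρ) := by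
    calc A - ι ∘L ρ = A - (A * Ring.inverse A) ∘L ι ∘L ρ := by
          rw [Ring.mul_inverse_cancel A hA]; rfl
      _ = A * (1 - (Ring.inverse A ∘L ι) ∘L ρ) := by rw [mul_sub, mul_one]; rfl
  rw [hfactor, hA.mul_left_iff, isUnit_one_sub_comp_comm, isUnit_iff_det_ne_zero]

end DeterminantCriterion

section AnalyticFamily

variable {𝕜 E V X : Type*} [NontriviallyNormedField 𝕜] [CompleteSpace 𝕜]
  [NormedAddCommGroup E] [NormedSpace 𝕜 E]
  [NormedAddCommGroup V] [NormedSpace 𝕜 V] [FiniteDimensional 𝕜 V]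
  [NormedAddCommGroup X] [NormedSpace 𝕜 X] [CompleteSpace X]

lemma analyticAt_det {M : E → V →L[𝕜] V} {z : E} (hM : AnalyticAt 𝕜 M z) :
    AnalyticAt 𝕜 (fun w => (M w).det) z := by
  let b := Module.finBasis 𝕜 V
  simp_rw [ContinuousLinearMap.det, ← LinearMap.det_toMatrix b, Matrix.det_apply']
  refine Finset.analyticAt_fun_sum _ fun σ _ =>
    analyticAt_const.mul (Finset.analyticAt_fun_prod _ fun i _ => ?_)
  simp only [LinearMap.toMatrix_apply]
  let entry : (V →L[𝕜] V) →L[𝕜] 𝕜 :=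
    LinearMap.toContinuousLinearMap (b.coord (σ i)) ∘L ContinuousLinearMap.apply 𝕜 V (b i)
  exact (entry.analyticAt _).comp hM

lemma eventually_not_isUnit_or_eventually_isUnit {T : 𝕜 → X →L[𝕜] X} {z : 𝕜}
    (hT : AnalyticAt 𝕜 T z) {R : X →L[𝕜] X} (hR : (R : X →ₗ[𝕜] X).HasFiniteRange)
    (hunit : IsUnit (T z + R)) :
    (∀ᶠ w in 𝓝 z, ¬ IsUnit (T w)) ∨ ∀ᶠ w in 𝓝[≠] z, IsUnit (T w) := by
  let V := (R : X →ₗ[𝕜] X).range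
  have : FiniteDimensional 𝕜 V := .of_fg hR
  let ι : V →L[𝕜] X := V.subtypeL
  let ρ : X →L[𝕜] V := R.rangeRestrict
  let A : 𝕜 → X →L[𝕜] X := fun w => T w + R
  let d : 𝕜 → 𝕜 := fun w => (1 - ρ ∘L Ring.inverse (A w) ∘L ι).det
  have hA : AnalyticAt 𝕜 A z := hT.add analyticAt_const
  have hd : AnalyticAt 𝕜 d z := by
    have hinv : AnalyticAt 𝕜 (fun w => Ring.inverse (A w)) z :=
      AnalyticAt.fun_comp (analyticOnNhd_inverse (A z) hunit) hA
    have hcomp : AnalyticAt 𝕜 (fun w => Ring.inverse (A w) ∘L ι) z :=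
      (((ContinuousLinearMap.compL 𝕜 V X X).flip ι).analyticAt _).comp hinv
    exact analyticAt_det
      (analyticAt_const.sub (((ContinuousLinearMap.compL 𝕜 V X V ρ).analyticAt _).comp hcomp))
  have hiff : ∀ᶠ w in 𝓝 z, (IsUnit (T w) ↔ d w ≠ 0) := by
    filter_upwards [hA.continuousAt.eventually (Units.isOpen.mem_nhds hunit)] with w hw
    have hTw : T w = A w - ι ∘L ρ := (add_sub_cancel_right (T w) R).symm
    rw [hTw]
    exact isUnit_sub_comp_iff_det_ne_zero hw ι ρ
  refine hd.eventually_eq_zero_or_eventually_ne_zero.imp (fun h => ?_) fun h => ?_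
  · filter_upwards [h, hiff] with w hw hwiff using fun hu => hwiff.1 hu hw
  · filter_upwards [h, hiff.filter_mono nhdsWithin_le_nhds] with w hw hwiff using hwiff.2 hw

end AnalyticFamily

section KernelPerturbation

variable {𝕜 E G : Type*} [NormedField 𝕜]
  [TopologicalSpace E] [AddCommGroup E] [Module 𝕜 E] [SeparatingDual 𝕜 E]
  [TopologicalSpace G] [AddCommGroup G] [IsTopologicalAddGroup G] [Module 𝕜 G]
  [ContinuousSMul 𝕜 G]

lemma exists_ker_add_smulRight_lt {T : E →L[𝕜] G}
    (hinj : ¬ Function.Injective T) (hsurj : ¬ Function.Surjective T) :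
    ∃ (f : StrongDual 𝕜 E) (y : G), (T + f.smulRight y).ker < T.ker := by
  obtain ⟨v, hv, hv0⟩ : ∃ v, T v = 0 ∧ v ≠ 0 := by
    simpa [injective_iff_map_eq_zero] using hinj
  obtain ⟨y, hy⟩ : ∃ y, ∀ x, T x ≠ y := by simpa [Function.Surjective] using hsurj
  obtain ⟨f, hf⟩ := SeparatingDual.exists_eq_one (R := 𝕜) hv0
  refine ⟨f, y, SetLike.lt_iff_le_and_exists.2 ⟨fun x hx => ?_, v, hv, fun hv' => ?_⟩⟩
  · have hx' : T x = -(f x • y) := eq_neg_of_add_eq_zero_left hx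
    have hfx : f x = 0 := by
      by_contra hne
      exact hy (-(f x)⁻¹ • x) (by simp [hx', smul_smul, hne])
    simpa [hfx] using hx'
  · exact hy 0 (by simpa [hv, hf, eq_comm] using hv')

end KernelPerturbation

section CompactPerturbation

variable {𝕜 X Y : Type*} [NontriviallyNormedField 𝕜] [NormedAddCommGroup X] [NormedSpace 𝕜 X]
  [NormedAddCommGroup Y] [NormedSpace 𝕜 Y]

lemma finiteDimensional_ker_one_sub [CompleteSpace 𝕜] {K : X →L[𝕜] X} (hK : IsCompactOperator K) :
    FiniteDimensional 𝕜 (1 - K).ker := by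
  have hfix : ∀ x ∈ (1 - K).ker, K x = x := fun x hx => (sub_eq_zero.1 hx).symm
  have hmaps : ∀ x ∈ (1 - K).ker, (K : X →ₗ[𝕜] X) x ∈ (1 - K).ker := fun x hx =>
    (hfix x hx).symm ▸ hx
  have hid : ⇑((K : X →ₗ[𝕜] X).restrict hmaps) = id :=
    funext fun x => Subtype.ext (hfix x x.2)
  exact .of_isCompactOperator_id
    (hid ▸ IsCompactOperator.restrict (f := (K : X →ₗ[𝕜] X)) hK hmaps (1 - K).isClosed_ker)

lemma isUnit_one_sub_of_injective [CompleteSpace X] {K : X →L[𝕜] X} (hK : IsCompactOperator K)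
    (hinj : Function.Injective ⇑(1 - K)) : IsUnit (1 - K) := by
  rcases hK.hasEigenvalue_or_mem_resolventSet one_ne_zero with heig | hres
  · obtain ⟨x, hx, hx0⟩ := heig.exists_hasEigenvector
    refine absurd (hinj ?_) hx0
    have hfix : K x = x := by simpa using! Module.End.mem_eigenspace_iff.1 hx
    simp [hfix]
  · simpa using spectrum.mem_resolventSet_iff.1 hres

lemma hasRightInverse_of_closedComplemented_ker [CompleteSpace X] [CompleteSpace Y]
    {T : X →L[𝕜] Y} (hker : T.ker.ClosedComplemented) (hsurj : Function.Surjective T) :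
    T.HasRightInverse := by
  obtain ⟨ρ, hρ⟩ := hker
  have hρsurj : ρ.range = ⊤ := LinearMap.range_eq_top.2 fun x => ⟨x, hρ x⟩
  have : CompleteSpace T.ker := T.isClosed_ker.completeSpace_coe
  let e := T.equivProdOfSurjectiveOfIsCompl ρ (LinearMap.range_eq_top.2 hsurj) hρsurj
    (LinearMap.isCompl_of_proj hρ)
  refine ⟨e.symm ∘L .inl 𝕜 Y T.ker, fun y => ?_⟩
  exact congrArg Prod.fst (e.apply_symm_apply (y, 0))

end CompactPerturbation

section FredholmAlternative

variable {𝕜 X : Type*} [RCLike 𝕜] [NormedAddCommGroup X] [NormedSpace 𝕜 X] [CompleteSpace X]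

lemma isUnit_one_sub_of_surjective {K : X →L[𝕜] X} (hK : IsCompactOperator K)
    (hsurj : Function.Surjective ⇑(1 - K)) : IsUnit (1 - K) := by
  have := finiteDimensional_ker_one_sub hK
  obtain ⟨S, hS⟩ := hasRightInverse_of_closedComplemented_ker
    (Submodule.ClosedComplemented.of_finiteDimensional (1 - K).ker) hsurj
  have hmul : (1 - K) * S = 1 := ContinuousLinearMap.ext hS
  -- `S` is again a compact perturbation of the identity, and it is injective.
  have hSeq : S = 1 - -(K ∘L S) := by
    rw [sub_neg_eq_add]
    exact sub_eq_iff_eq_add.1 ((sub_mul 1 K S).symm.trans hmul)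
  have hSunit : IsUnit S := by
    rw [hSeq]
    exact isUnit_one_sub_of_injective (hK.comp_clm S).neg (hSeq ▸ hS.injective)
  exact hSunit.mul_right_iff.1 (hmul.symm ▸ isUnit_one)

lemma exists_hasFiniteRange_isUnit_one_sub_add {K : X →L[𝕜] X} (hK : IsCompactOperator K) :
    ∃ R : X →L[𝕜] X, (R : X →ₗ[𝕜] X).HasFiniteRange ∧ IsUnit (1 - K + R) := by
  induction h : Module.finrank 𝕜 (1 - K).ker using Nat.strong_induction_on generalizing K with
  | _ n ih =>
    by_cases hinj : Function.Injective ⇑(1 - K)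
    · exact ⟨0, .zero, by simpa using isUnit_one_sub_of_injective hK hinj⟩
    by_cases hsurj : Function.Surjective ⇑(1 - K)
    · exact ⟨0, .zero, by simpa using isUnit_one_sub_of_surjective hK hsurj⟩
    obtain ⟨f, y, hlt⟩ := exists_ker_add_smulRight_lt hinj hsurj
    have hfy : IsCompactOperator (f.smulRight y) :=
      (isCompactOperator_of_locallyCompactSpace_rng
        (ContinuousLinearMap.toSpanSingleton 𝕜 y)).comp_clm f
    have heq : 1 - K + f.smulRight y = 1 - (K - f.smulRight y) := by abel
    have := finiteDimensional_ker_one_sub hK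
    obtain ⟨R, hR, hunit⟩ := ih _ (h ▸ Submodule.finrank_lt_finrank_of_lt (heq ▸ hlt))
      (hK.sub hfy) rfl
    refine ⟨f.smulRight y + R, ?_, by rwa [← add_assoc, heq]⟩
    exact LinearMap.HasFiniteRange.add
      (.comp_left .of_isNoetherian_rng (LinearMap.toSpanSingleton 𝕜 X y)) hR

end FredholmAlternative

section Propagation

variable {α : Type*} [TopologicalSpace α] [T1Space α] {p : α → Prop}

lemma isOpen_setOfPred_eventually_nhdsNE : IsOpen {x | ∀ᶠ w in 𝓝[≠] x, p w} := by
  refine isOpen_iff_eventually.2 fun x hx => ?_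
  filter_upwards [eventually_nhdsWithin_iff.1 (eventually_nhdsNE_eventually_nhds_iff.2 hx)]
    with y hy
  rcases eq_or_ne y x with rfl | hne
  · exact hx
  · exact (hy hne).filter_mono nhdsWithin_le_nhds

lemma eventually_nhdsNE_of_isPreconnected [∀ x : α, NeBot (𝓝[≠] x)] {D : Set α}
    (hD : IsPreconnected D)
    (hp : ∀ x ∈ D, (∀ᶠ w in 𝓝 x, ¬ p w) ∨ ∀ᶠ w in 𝓝[≠] x, p w) (hex : ∃ x ∈ D, p x) :
    ∀ x ∈ D, ∀ᶠ w in 𝓝[≠] x, p w := by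
  obtain ⟨x₀, hx₀, hpx₀⟩ := hex
  have hdisj : Disjoint {x | ∀ᶠ w in 𝓝[≠] x, p w} {x | ∀ᶠ w in 𝓝 x, ¬ p w} :=
    Set.disjoint_left.2 fun x (hx : ∀ᶠ w in 𝓝[≠] x, p w) (hx' : ∀ᶠ w in 𝓝 x, ¬ p w) =>
      have ⟨_, hw, hw'⟩ := (hx.and (hx'.filter_mono nhdsWithin_le_nhds)).exists
      hw' hw
  exact hD.subset_left_of_subset_union isOpen_setOfPred_eventually_nhdsNE
    isOpen_setOfPred_eventually_nhds hdisj (fun x hx => (hp x hx).symm)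
    ⟨x₀, hx₀, (hp x₀ hx₀).resolve_left fun h => h.self_of_nhds hpx₀⟩

end Propagation

theorem analytic_fredholm_second_alternative_general
    {𝕜 X : Type*} [RCLike 𝕜] [NormedAddCommGroup X] [NormedSpace 𝕜 X] [CompleteSpace X]
    (D : Set 𝕜) (hDconn : IsPreconnected D)
    (F : 𝕜 → X →L[𝕜] X) (hFanalytic : AnalyticOnNhd 𝕜 F D)
    (hFcompact : ∀ z ∈ D, IsCompactOperator (F z))
    (hinv : ∃ z₀ ∈ D, IsUnit (1 - F z₀)) :
    (∀ z ∈ D, ∃ U ∈ 𝓝 z, U ∩ {w ∈ D | ¬ IsUnit (1 - F w)} ⊆ {z}) ∧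
      AnalyticOnNhd 𝕜 (fun z => Ring.inverse (1 - F z))
        (D \ {w ∈ D | ¬ IsUnit (1 - F w)}) := by
  have hsub : AnalyticOnNhd 𝕜 (fun z => 1 - F z) D := analyticOnNhd_const.sub hFanalytic
  have hpunctured : ∀ z ∈ D, ∀ᶠ w in 𝓝[≠] z, IsUnit (1 - F w) := by
    refine eventually_nhdsNE_of_isPreconnected hDconn (fun z hz => ?_) hinv
    obtain ⟨R, hR, hunit⟩ := exists_hasFiniteRange_isUnit_one_sub_add (hFcompact z hz)
    exact eventually_not_isUnit_or_eventually_isUnit (hsub z hz) hR hunit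
  refine ⟨fun z hz => ?_, fun z hz => ?_⟩
  · refine ⟨_, eventually_nhdsWithin_iff.1 (hpunctured z hz), ?_⟩
    rintro w ⟨hw, -, hwsing⟩
    exact by_contra fun hne => hwsing (hw hne)
  · have hunit : IsUnit (1 - F z) := by_contra fun h => hz.2 ⟨hz.1, h⟩
    exact AnalyticAt.fun_comp (analyticOnNhd_inverse _ hunit) (hsub z hz.1)

/-- Analytic Fredholm theorem, second alternative: if an analytic family `F` of
compact operators on a complex Hilbert space, defined on an open connected
`D ⊆ ℂ`, is such that `Id - F λ₀` is invertible for some `λ₀ ∈ D`, then the set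
`S` of points of `D` where `Id - F λ` is not invertible has no accumulation point
in `D`, and `λ ↦ (Id - F λ)⁻¹` is analytic on `D \ S`. -/
theorem analytic_fredholm_second_alternative
    {H : Type*} [NormedAddCommGroup H] [InnerProductSpace ℂ H] [CompleteSpace H]
    (D : Set ℂ) (hDopen : IsOpen D) (hDconn : IsConnected D)
    (F : ℂ → H →L[ℂ] H) (hFanalytic : AnalyticOnNhd ℂ F D)
    (hFcompact : ∀ z ∈ D, IsCompactOperator (F z))
    (hinv : ∃ z₀ ∈ D, IsUnit (1 - F z₀)) :
    (∀ z ∈ D, ∃ U ∈ 𝓝 z, U ∩ {w ∈ D | ¬ IsUnit (1 - F w)} ⊆ {z}) ∧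
      AnalyticOnNhd ℂ (fun z => Ring.inverse (1 - F z))
        (D \ {w ∈ D | ¬ IsUnit (1 - F w)}) := by
  exact analytic_fredholm_second_alternative_general D hDconn.isPreconnected F hFanalytic hFcompact
    hinv
end

section
/- Let n ≥ 2, let Ω be a bounded Lebesgue-measurable subset of ℝⁿ, and let k : Ω × Ω → ℂ be measurable with |k(x,y)| ≤ C‖x − y‖^{1−n} for all (x,y) ∈ Ω × Ω, for some constant C > 0. Then the integral operator Φf(x) = ∫_Ω k(x,y) f(y) dy is a well-defined compact operator on L²(Ω). -/
open MeasureTheory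
open scoped ENNReal NNReal

/-!
Split the kernel by the size of its values, `k = k 1_{|k| > M} + k 1_{|k| ≤ M}`. Since `Ω` has
finite measure, the bounded part lies in `L²(Ω × Ω)` and gives a Hilbert–Schmidt, hence compact,
operator. The large part is dominated by the truncation `w 1_{w > M}` of the convolution kernel
`w z = C ‖z‖ ^ (1 - n)`, so by Schur's test its operator has norm at most `∫ w 1_{w > M}`. As `w`
is integrable near `0` and bounded away from it, these integrals tend to `0` as `M → ∞`, and the
operator is a norm limit of compact ones.
-/

section HilbertSchmidtCriterion

variable {𝕜 ι H H' : Type*} [RCLike 𝕜] [NormedAddCommGroup H] [InnerProductSpace 𝕜 H]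
  [NormedAddCommGroup H'] [NormedSpace 𝕜 H']

theorem norm_sum_smulRight_le_of_orthonormal {b : ι → H} (hb : Orthonormal 𝕜 b) (v : ι → H')
    (s : Finset ι) :
    ‖∑ i ∈ s, (innerSL 𝕜 (b i)).smulRight (v i)‖ ≤ √(∑ i ∈ s, ‖v i‖ ^ 2) := by
  refine ContinuousLinearMap.opNorm_le_bound _ (Real.sqrt_nonneg _) fun f => ?_
  calc ‖(∑ i ∈ s, (innerSL 𝕜 (b i)).smulRight (v i)) f‖
      ≤ ∑ i ∈ s, ‖inner 𝕜 (b i) f‖ * ‖v i‖ := by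
        simpa [norm_smul] using norm_sum_le s fun i => inner 𝕜 (b i) f • v i
    _ ≤ √(∑ i ∈ s, ‖inner 𝕜 (b i) f‖ ^ 2) * √(∑ i ∈ s, ‖v i‖ ^ 2) :=
        Real.sum_mul_le_sqrt_mul_sqrt _ _ _
    _ ≤ ‖f‖ * √(∑ i ∈ s, ‖v i‖ ^ 2) := by
        gcongr
        exact Real.sqrt_le_iff.2 ⟨norm_nonneg _, hb.sum_inner_products_le f⟩
    _ = √(∑ i ∈ s, ‖v i‖ ^ 2) * ‖f‖ := mul_comm _ _

theorem summable_smulRight_of_orthonormal [CompleteSpace H'] {b : ι → H} (hb : Orthonormal 𝕜 b)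
    {v : ι → H'} (hv : Summable fun i => ‖v i‖ ^ 2) :
    Summable fun i => (innerSL 𝕜 (b i)).smulRight (v i) := by
  refine summable_iff_vanishing_norm.2 fun ε hε => ?_
  obtain ⟨s, hs⟩ := summable_iff_vanishing_norm.1 hv (ε ^ 2) (by positivity)
  refine ⟨s, fun t ht => (norm_sum_smulRight_le_of_orthonormal hb v t).trans_lt ?_⟩
  exact (Real.sqrt_lt' hε).2 ((le_abs_self _).trans_lt (hs t ht))

theorem isCompactOperator_of_summable_sq_norm [CompleteSpace H'] (b : HilbertBasis ι 𝕜 H)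
    (Φ : H →L[𝕜] H') (hΦ : Summable fun i => ‖Φ (b i)‖ ^ 2) : IsCompactOperator Φ := by
  have hsum := summable_smulRight_of_orthonormal b.orthonormal hΦ
  have hexpand : ∑' i, (innerSL 𝕜 (b i)).smulRight (Φ (b i)) = Φ := by
    ext f
    refine (hsum.hasSum.mapL (ContinuousLinearMap.apply 𝕜 H' f)).unique ?_
    simpa [b.repr_apply_apply] using (b.hasSum_repr f).mapL Φ
  have hrankOne (i) : IsCompactOperator ((innerSL 𝕜 (b i)).smulRight (Φ (b i))) :=
    (isCompactOperator_of_locallyCompactSpace_rng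
      ((1 : 𝕜 →L[𝕜] 𝕜).smulRight (Φ (b i)))).comp_clm (innerSL 𝕜 (b i))
  refine isCompactOperator_of_tendsto (hexpand ▸ hsum.hasSum : HasSum _ Φ)
    (.of_forall fun s => ?_)
  exact (compactOperator (RingHom.id 𝕜) H H').sum_mem fun i _ => hrankOne i

end HilbertSchmidtCriterion

section L2

variable {α β E 𝕜 : Type*} [MeasurableSpace α] [MeasurableSpace β] {μ : Measure α} {ν : Measure β}
  [NormedAddCommGroup E] [RCLike 𝕜]

theorem eLpNorm_two_sq (f : α → E) : eLpNorm f 2 μ ^ 2 = ∫⁻ x, ‖f x‖ₑ ^ 2 ∂μ := by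
  simpa using eLpNorm_nnreal_pow_eq_lintegral (f := f) (μ := μ) (p := 2) two_ne_zero

theorem norm_sq_eq_integral_norm_sq (f : Lp E 2 μ) : ‖f‖ ^ 2 = ∫ x, ‖f x‖ ^ 2 ∂μ := by
  rw [Lp.norm_def, ← ENNReal.toReal_pow, eLpNorm_two_sq,
    integral_eq_lintegral_of_nonneg_ae (.of_forall fun x => by positivity)
      (by fun_prop)]
  simp [ENNReal.ofReal_pow]

theorem sq_lintegral_mul_le {f g : α → ℝ≥0∞} (hf : AEMeasurable f μ) (hg : AEMeasurable g μ) :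
    (∫⁻ x, f x * g x ∂μ) ^ 2 ≤ (∫⁻ x, f x ^ 2 ∂μ) * ∫⁻ x, g x ^ 2 ∂μ := by
  have hsqrt (a : ℝ≥0∞) : (a ^ (1 / 2 : ℝ)) ^ 2 = a := by
    rw [← ENNReal.rpow_natCast, ← ENNReal.rpow_mul]; norm_num
  have hholder := ENNReal.lintegral_mul_le_Lp_mul_Lq μ Real.HolderConjugate.two_two hf hg
  simp only [Pi.mul_apply, ENNReal.rpow_two] at hholder
  simpa only [mul_pow, hsqrt] using pow_le_pow_left' hholder 2

theorem sq_lintegral_weight_mul_le {a u : α → ℝ≥0∞} (ha : AEMeasurable a μ)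
    (hu : AEMeasurable u μ) :
    (∫⁻ x, a x * u x ∂μ) ^ 2 ≤ (∫⁻ x, a x ∂μ) * ∫⁻ x, a x * u x ^ 2 ∂μ := by
  have hsqrt (c : ℝ≥0∞) : c ^ (1 / 2 : ℝ) * c ^ (1 / 2 : ℝ) = c := by
    rw [← ENNReal.rpow_add_of_nonneg _ _ (by norm_num) (by norm_num)]; norm_num
  have hcs := sq_lintegral_mul_le (ha.pow_const (1 / 2 : ℝ)) ((ha.pow_const (1 / 2 : ℝ)).mul hu)
  simpa only [Pi.mul_apply, ← mul_assoc, mul_pow, sq (_ ^ (1 / 2 : ℝ)), hsqrt] using hcs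

theorem ae_integrable_of_sq_lintegral_ne_top [SFinite ν] {F : α × β → E}
    (hF : AEStronglyMeasurable F (μ.prod ν))
    (hfin : ∫⁻ x, (∫⁻ y, ‖F (x, y)‖ₑ ∂ν) ^ 2 ∂μ ≠ ∞) :
    ∀ᵐ x ∂μ, Integrable (fun y => F (x, y)) ν := by
  filter_upwards [hF.prodMk_left, ae_lt_top' (hF.enorm.lintegral_prod_right'.pow_const 2) hfin]
    with x hmeas hx
  exact ⟨hmeas, by simpa [HasFiniteIntegral] using hx⟩

theorem eLpNorm_integral_sq_le [NormedSpace ℝ E] (F : α × β → E) :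
    eLpNorm (fun x => ∫ y, F (x, y) ∂ν) 2 μ ^ 2 ≤ ∫⁻ x, (∫⁻ y, ‖F (x, y)‖ₑ ∂ν) ^ 2 ∂μ := by
  rw [eLpNorm_two_sq]
  gcongr with x
  exact enorm_integral_le_lintegral_enorm _

theorem sum_sq_norm_integral_mul_le {ι : Type*} {b : ι → Lp 𝕜 2 μ} (hb : Orthonormal 𝕜 b)
    {g : α → 𝕜} (hg : MemLp g 2 μ) (s : Finset ι) :
    ∑ i ∈ s, ‖∫ x, g x * b i x ∂μ‖ ^ 2 ≤ ∫ x, ‖g x‖ ^ 2 ∂μ := by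
  have hstar := hg.star
  have hinner (i) : inner 𝕜 hstar.toLp (b i) = ∫ x, g x * b i x ∂μ := by
    rw [L2.inner_def]
    refine integral_congr_ae ?_
    filter_upwards [hstar.coeFn_toLp] with x hx
    simp [hx, mul_comm]
  have hnorm : ‖hstar.toLp‖ ^ 2 = ∫ x, ‖g x‖ ^ 2 ∂μ := by
    rw [norm_sq_eq_integral_norm_sq]
    refine integral_congr_ae ?_
    filter_upwards [hstar.coeFn_toLp] with x hx
    simp [hx]
  simpa only [← hinner, ← hnorm, norm_inner_symm] using hb.sum_inner_products_le hstar.toLp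

end L2

section IntegralOperator

variable {α β 𝕜 : Type*} [MeasurableSpace α] [MeasurableSpace β] [RCLike 𝕜]
  {μ : Measure α} {ν : Measure β} {k l : α × β → 𝕜} {Φ Ψ : Lp 𝕜 2 ν →L[𝕜] Lp 𝕜 2 μ}

/-- `IsIntegralOperator k Φ` says that `Φ : L²(ν) → L²(μ)` is the integral operator with kernel
`k`. Convergence of the defining integral at almost every point is part of the notion, since a
divergent Bochner integral has the value `0`. -/
structure IsIntegralOperator (k : α × β → 𝕜) (Φ : Lp 𝕜 2 ν →L[𝕜] Lp 𝕜 2 μ) : Prop where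
  ae_integrable (f : Lp 𝕜 2 ν) : ∀ᵐ x ∂μ, Integrable (fun y => k (x, y) * f y) ν
  apply_ae_eq (f : Lp 𝕜 2 ν) : Φ f =ᵐ[μ] fun x => ∫ y, k (x, y) * f y ∂ν

namespace IsIntegralOperator

theorem unique (hΦ : IsIntegralOperator k Φ) (hΨ : IsIntegralOperator k Ψ) : Φ = Ψ := by
  ext1 f
  exact Lp.ext ((hΦ.apply_ae_eq f).trans (hΨ.apply_ae_eq f).symm)

theorem add (hΦ : IsIntegralOperator k Φ) (hΨ : IsIntegralOperator l Ψ) :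
    IsIntegralOperator (k + l) (Φ + Ψ) where
  ae_integrable f := by
    filter_upwards [hΦ.ae_integrable f, hΨ.ae_integrable f] with x hk hl
    simpa only [Pi.add_apply, add_mul] using! hk.add hl
  apply_ae_eq f := by
    filter_upwards [hΦ.ae_integrable f, hΨ.ae_integrable f, hΦ.apply_ae_eq f, hΨ.apply_ae_eq f,
      Lp.coeFn_add (Φ f) (Ψ f)] with x hk hl hΦx hΨx hadd
    simp only [add_apply, hadd, Pi.add_apply, hΦx, hΨx, add_mul, integral_add hk hl]

end IsIntegralOperator

theorem exists_isIntegralOperator_of_sq_lintegral_le [SFinite ν]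
    (hk : AEStronglyMeasurable k (μ.prod ν))
    (A : ℝ≥0) (hA : ∀ f : Lp 𝕜 2 ν,
      ∫⁻ x, (∫⁻ y, ‖k (x, y) * f y‖ₑ ∂ν) ^ 2 ∂μ ≤ (A * ‖f‖ₑ) ^ 2) :
    ∃ Φ : Lp 𝕜 2 ν →L[𝕜] Lp 𝕜 2 μ, ‖Φ‖ ≤ A ∧ IsIntegralOperator k Φ := by
  have hmeas (f : Lp 𝕜 2 ν) : AEStronglyMeasurable (fun p => k p * f p.2) (μ.prod ν) :=
    hk.mul (Lp.aestronglyMeasurable f).comp_snd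
  have hint (f : Lp 𝕜 2 ν) : ∀ᵐ x ∂μ, Integrable (fun y => k (x, y) * f y) ν :=
    ae_integrable_of_sq_lintegral_ne_top (hmeas f) ((hA f).trans_lt (by finiteness)).ne
  have hnorm (f : Lp 𝕜 2 ν) : eLpNorm (fun x => ∫ y, k (x, y) * f y ∂ν) 2 μ ≤ A * ‖f‖ₑ :=
    (ENNReal.pow_le_pow_left_iff two_ne_zero).1
      ((eLpNorm_integral_sq_le fun p => k p * f p.2).trans (hA f))
  have hmem (f : Lp 𝕜 2 ν) : MemLp (fun x => ∫ y, k (x, y) * f y ∂ν) 2 μ :=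
    ⟨(hmeas f).integral_prod_right', (hnorm f).trans_lt (by finiteness)⟩
  let L : Lp 𝕜 2 ν →ₗ[𝕜] Lp 𝕜 2 μ :=
    { toFun f := (hmem f).toLp
      map_add' f g := by
        rw [← MemLp.toLp_add]
        refine MemLp.toLp_congr _ _ ?_
        filter_upwards [hint f, hint g] with x hf hg
        rw [Pi.add_apply, ← integral_add hf hg]
        refine integral_congr_ae ?_
        filter_upwards [Lp.coeFn_add f g] with y hy
        rw [hy, Pi.add_apply, mul_add]
      map_smul' c f := by
        rw [RingHom.id_apply, ← MemLp.toLp_const_smul]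
        refine MemLp.toLp_congr _ _ (.of_forall fun x => ?_)
        rw [Pi.smul_apply, ← integral_smul]
        refine integral_congr_ae ?_
        filter_upwards [Lp.coeFn_smul c f] with y hy
        rw [hy, Pi.smul_apply, mul_smul_comm] }
  have hL (f) : ‖L f‖ ≤ A * ‖f‖ := by
    simpa [L, Lp.norm_toLp] using ENNReal.toReal_mono (by finiteness) (hnorm f)
  exact ⟨L.mkContinuous A hL, L.mkContinuous_norm_le A.2 hL, hint, fun f => (hmem f).coeFn_toLp⟩

theorem exists_isIntegralOperator_of_memLp_two [SFinite ν] (hk : MemLp k 2 (μ.prod ν)) :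
    ∃ Φ : Lp 𝕜 2 ν →L[𝕜] Lp 𝕜 2 μ, IsIntegralOperator k Φ := by
  have hA : ((eLpNorm k 2 (μ.prod ν)).toNNReal : ℝ≥0∞) = eLpNorm k 2 (μ.prod ν) :=
    ENNReal.coe_toNNReal hk.2.ne
  obtain ⟨Φ, -, hΦ⟩ := exists_isIntegralOperator_of_sq_lintegral_le hk.1
    (eLpNorm k 2 (μ.prod ν)).toNNReal fun f => by
      calc ∫⁻ x, (∫⁻ y, ‖k (x, y) * f y‖ₑ ∂ν) ^ 2 ∂μ
          ≤ ∫⁻ x, (∫⁻ y, ‖k (x, y)‖ₑ ^ 2 ∂ν) * ‖f‖ₑ ^ 2 ∂μ := by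
            refine lintegral_mono_ae ?_
            filter_upwards [hk.1.prodMk_left] with x hkx
            simpa only [enorm_mul, Lp.enorm_def, eLpNorm_two_sq] using
              sq_lintegral_mul_le hkx.enorm (Lp.aestronglyMeasurable f).enorm
        _ = (eLpNorm k 2 (μ.prod ν) * ‖f‖ₑ) ^ 2 := by
            rw [lintegral_mul_const' _ _ (by finiteness), mul_pow, eLpNorm_two_sq,
              lintegral_prod _ (hk.1.enorm.pow_const 2)]
        _ = _ := by rw [hA]
  exact ⟨Φ, hΦ⟩

theorem IsIntegralOperator.isCompactOperator_of_memLp_two [SFinite μ] [SFinite ν]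
    (hΦ : IsIntegralOperator k Φ) (hk : MemLp k 2 (μ.prod ν)) : IsCompactOperator Φ := by
  obtain ⟨w, b, -⟩ := exists_hilbertBasis 𝕜 (Lp 𝕜 2 ν)
  have hksq : Integrable (fun p => ‖k p‖ ^ 2) (μ.prod ν) :=
    (memLp_two_iff_integrable_sq_norm hk.1).1 hk
  have hΦsq (i) : Integrable (fun x => ‖Φ (b i) x‖ ^ 2) μ :=
    (memLp_two_iff_integrable_sq_norm (Lp.aestronglyMeasurable _)).1 (Lp.memLp _)
  have hbessel (s : Finset w) :
      ∀ᵐ x ∂μ, ∑ i ∈ s, ‖Φ (b i) x‖ ^ 2 ≤ ∫ y, ‖k (x, y)‖ ^ 2 ∂ν := by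
    have happly : ∀ᵐ x ∂μ, ∀ i ∈ s, Φ (b i) x = ∫ y, k (x, y) * b i y ∂ν :=
      (ae_ball_iff s.countable_toSet).2 fun i _ => hΦ.apply_ae_eq (b i)
    filter_upwards [happly, hk.1.prodMk_left, hksq.prod_right_ae] with x hx hmeas hsq
    rw [Finset.sum_congr rfl fun i hi => by rw [hx i hi]]
    exact sum_sq_norm_integral_mul_le b.orthonormal
      ((memLp_two_iff_integrable_sq_norm hmeas).2 hsq) s
  refine isCompactOperator_of_summable_sq_norm b Φ
    (summable_of_sum_le (c := ∫ x, ∫ y, ‖k (x, y)‖ ^ 2 ∂ν ∂μ) (fun i => by positivity) fun s => ?_)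
  calc ∑ i ∈ s, ‖Φ (b i)‖ ^ 2 = ∫ x, ∑ i ∈ s, ‖Φ (b i) x‖ ^ 2 ∂μ := by
        simp only [norm_sq_eq_integral_norm_sq, integral_finsetSum _ fun i _ => hΦsq i]
    _ ≤ ∫ x, ∫ y, ‖k (x, y)‖ ^ 2 ∂ν ∂μ :=
        integral_mono_ae (integrable_finsetSum _ fun i _ => hΦsq i) hksq.integral_prod_left
          (hbessel s)

/-- The hypothesis of Schur's test: almost everywhere bounds on the two marginal integrals of `‖k‖`,
`A` for those over the second variable and `B` for those over the first. -/
structure SchurBound (k : α × β → 𝕜) (μ : Measure α) (ν : Measure β) (A B : ℝ≥0) : Prop where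
  right : ∀ᵐ x ∂μ, ∫⁻ y, ‖k (x, y)‖ₑ ∂ν ≤ A
  left : ∀ᵐ y ∂ν, ∫⁻ x, ‖k (x, y)‖ₑ ∂μ ≤ B

theorem SchurBound.exists_isIntegralOperator [SFinite μ] [SFinite ν] {A B : ℝ≥0}
    (h : SchurBound k μ ν A B) (hk : AEStronglyMeasurable k (μ.prod ν)) :
    ∃ Φ : Lp 𝕜 2 ν →L[𝕜] Lp 𝕜 2 μ, ‖Φ‖ ≤ NNReal.sqrt (A * B) ∧ IsIntegralOperator k Φ := by
  refine exists_isIntegralOperator_of_sq_lintegral_le hk _ fun f => ?_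
  have hf := (Lp.aestronglyMeasurable f).enorm
  calc ∫⁻ x, (∫⁻ y, ‖k (x, y) * f y‖ₑ ∂ν) ^ 2 ∂μ
      ≤ ∫⁻ x, A * ∫⁻ y, ‖k (x, y)‖ₑ * ‖f y‖ₑ ^ 2 ∂ν ∂μ := by
        refine lintegral_mono_ae ?_
        filter_upwards [h.right, hk.prodMk_left] with x hx hkx
        simp only [enorm_mul]
        exact (sq_lintegral_weight_mul_le hkx.enorm hf).trans (by gcongr)
    _ = A * ∫⁻ y, ∫⁻ x, ‖k (x, y)‖ₑ * ‖f y‖ₑ ^ 2 ∂μ ∂ν := by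
        rw [lintegral_const_mul' _ _ (by finiteness),
          lintegral_lintegral_swap (hk.enorm.mul (hf.comp_snd.pow_const 2))]
    _ ≤ A * ∫⁻ y, B * ‖f y‖ₑ ^ 2 ∂ν := by
        refine mul_le_mul_right (lintegral_mono_ae ?_) _
        filter_upwards [h.left] with y hy
        rw [lintegral_mul_const' _ _ (by finiteness)]
        gcongr
    _ = (NNReal.sqrt (A * B) * ‖f‖ₑ) ^ 2 := by
        rw [lintegral_const_mul' _ _ (by finiteness), ← eLpNorm_two_sq, ← Lp.enorm_def, mul_pow,
          ← ENNReal.coe_pow, NNReal.sq_sqrt, ENNReal.coe_mul, mul_assoc]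

theorem exists_isCompactOperator_isIntegralOperator_of_schurBound_tail [IsFiniteMeasure μ]
    [IsFiniteMeasure ν] (hk : AEStronglyMeasurable k (μ.prod ν))
    (htail : ∀ ε : ℝ≥0, 0 < ε → ∃ M : ℝ, SchurBound ({p | M < ‖k p‖}.indicator k) μ ν ε ε) :
    ∃ Φ : Lp 𝕜 2 ν →L[𝕜] Lp 𝕜 2 μ, IsCompactOperator Φ ∧ IsIntegralOperator k Φ := by
  have hsplit (ε : ℝ≥0) (hε : 0 < ε) : ∃ T S : Lp 𝕜 2 ν →L[𝕜] Lp 𝕜 2 μ,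
      ‖T‖ ≤ ε ∧ IsCompactOperator S ∧ IsIntegralOperator k (T + S) := by
    obtain ⟨M, hM⟩ := htail ε hε
    have hset : NullMeasurableSet {p | M < ‖k p‖} (μ.prod ν) :=
      nullMeasurableSet_lt aemeasurable_const hk.norm.aemeasurable
    obtain ⟨T, hTnorm, hT⟩ := hM.exists_isIntegralOperator (hk.indicator₀ hset)
    have hbounded : MemLp ({p | M < ‖k p‖}ᶜ.indicator k) 2 (μ.prod ν) := by
      refine .of_bound (hk.indicator₀ hset.compl) (max M 0) (.of_forall fun p => ?_)
      by_cases hp : M < ‖k p‖ <;> simp_all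
    obtain ⟨S, hS⟩ := exists_isIntegralOperator_of_memLp_two hbounded
    refine ⟨T, S, by simpa using hTnorm, hS.isCompactOperator_of_memLp_two hbounded, ?_⟩
    simpa only [Set.indicator_self_add_compl] using hT.add hS
  obtain ⟨T₁, S₁, -, -, hΦ⟩ := hsplit 1 one_pos
  refine ⟨T₁ + S₁, ?_, hΦ⟩
  refine isClosed_setOfPred_isCompactOperator.closure_subset
    (Metric.mem_closure_iff.2 fun ε hε => ?_)
  lift ε to ℝ≥0 using hε.le
  obtain ⟨T, S, hT, hS, hTS⟩ := hsplit (ε / 2) (half_pos hε)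
  refine ⟨S, hS, ?_⟩
  rw [hΦ.unique hTS, dist_eq_norm, add_sub_cancel_right]
  exact hT.trans_lt (half_lt_self hε)

end IntegralOperator

section ConvolutionBound

variable {G F 𝕜 : Type*} [MeasurableSpace G] [NormedAddCommGroup F] [RCLike 𝕜]

theorem exists_lintegral_indicator_norm_le {μ : Measure G} {w : G → F} {M₀ : ℝ}
    (hw : Integrable ({z | M₀ < ‖w z‖}.indicator w) μ) {ε : ℝ≥0} (hε : 0 < ε) :
    ∃ M : ℝ, ∫⁻ z, ‖{z | M < ‖w z‖}.indicator w z‖ₑ ∂μ ≤ ε := by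
  obtain ⟨M, -, hM⟩ := (memLp_one_iff_integrable.2 hw).integral_indicator_norm_ge_nonneg_le
    (NNReal.coe_pos.2 hε)
  rw [ENNReal.ofReal_coe_nnreal] at hM
  refine ⟨max M M₀, le_trans (lintegral_mono fun z => ?_) hM⟩
  by_cases hz : max M M₀ < ‖w z‖
  · obtain ⟨hMz, hM₀z⟩ := max_lt_iff.1 hz
    simp [Set.indicator, hM₀z, hMz, hMz.le]
  · rw [Set.indicator_of_notMem (by simpa only [Set.mem_ofPred_eq] using hz), enorm_zero]
    exact zero_le

variable [AddGroup G] [MeasurableAdd G] [MeasurableNeg G] {μ ρ σ : Measure G}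
  [μ.IsAddLeftInvariant] [μ.IsAddRightInvariant] [μ.IsNegInvariant]
  {k : G × G → 𝕜} {w : G → F}

theorem SchurBound.of_norm_le_sub [SFinite ρ] [SFinite σ] (hρ : ρ ≤ μ) (hσ : σ ≤ μ)
    (hkw : ∀ᵐ p ∂ρ.prod σ, ‖k p‖ ≤ ‖w (p.1 - p.2)‖) {A : ℝ≥0} (hA : ∫⁻ z, ‖w z‖ₑ ∂μ ≤ A) :
    SchurBound k ρ σ A A where
  right := by
    filter_upwards [Measure.ae_ae_of_ae_prod hkw] with x hx
    calc ∫⁻ y, ‖k (x, y)‖ₑ ∂σ ≤ ∫⁻ y, ‖w (x - y)‖ₑ ∂σ :=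
          lintegral_mono_ae (hx.mono fun y hy => enorm_le_iff_norm_le.2 hy)
      _ ≤ ∫⁻ y, ‖w (x - y)‖ₑ ∂μ := lintegral_mono' hσ le_rfl
      _ = ∫⁻ z, ‖w z‖ₑ ∂μ := lintegral_sub_left_eq_self (fun z => ‖w z‖ₑ) x
      _ ≤ A := hA
  left := by
    have hswap := Measure.measurePreserving_swap (μ := σ) (ν := ρ) |>.quasiMeasurePreserving.ae hkw
    filter_upwards [Measure.ae_ae_of_ae_prod hswap] with y hy
    calc ∫⁻ x, ‖k (x, y)‖ₑ ∂ρ ≤ ∫⁻ x, ‖w (x - y)‖ₑ ∂ρ :=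
          lintegral_mono_ae (hy.mono fun x hx => enorm_le_iff_norm_le.2 hx)
      _ ≤ ∫⁻ x, ‖w (x - y)‖ₑ ∂μ := lintegral_mono' hρ le_rfl
      _ = ∫⁻ z, ‖w z‖ₑ ∂μ := lintegral_sub_right_eq_self (fun z => ‖w z‖ₑ) y
      _ ≤ A := hA

theorem exists_isCompactOperator_isIntegralOperator_of_norm_le_sub [IsFiniteMeasure ρ]
    [IsFiniteMeasure σ] (hρ : ρ ≤ μ) (hσ : σ ≤ μ) (hk : AEStronglyMeasurable k (ρ.prod σ))
    (hkw : ∀ᵐ p ∂ρ.prod σ, ‖k p‖ ≤ ‖w (p.1 - p.2)‖) {M₀ : ℝ}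
    (hw : Integrable ({z | M₀ < ‖w z‖}.indicator w) μ) :
    ∃ Φ : Lp 𝕜 2 σ →L[𝕜] Lp 𝕜 2 ρ, IsCompactOperator Φ ∧ IsIntegralOperator k Φ := by
  refine exists_isCompactOperator_isIntegralOperator_of_schurBound_tail hk fun ε hε => ?_
  obtain ⟨M, hM⟩ := exists_lintegral_indicator_norm_le hw hε
  refine ⟨M, .of_norm_le_sub (w := {z | M < ‖w z‖}.indicator w) hρ hσ ?_ hM⟩
  filter_upwards [hkw] with p hp
  by_cases hMk : M < ‖k p‖
  · simpa [hMk, hMk.trans_le hp] using hp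
  · simp [hMk]

end ConvolutionBound

theorem ae_prod_fst_ne_snd {α : Type*} [MeasurableSpace α] [MeasurableEq α] (μ ν : Measure α)
    [SFinite ν] [NullSingletonClass ν] : ∀ᵐ p ∂μ.prod ν, p.1 ≠ p.2 := by
  refine (Measure.ae_prod_iff_ae_ae measurableSet_diagonal.compl).2
    (.of_forall fun x => ?_)
  filter_upwards [Measure.ae_ne ν x] with y hy using hy.symm

section RieszKernel

variable {E : Type*} [NormedAddCommGroup E] [NormedSpace ℝ E] [FiniteDimensional ℝ E]
  [MeasurableSpace E] [BorelSpace E] (μ : Measure E) [μ.IsAddHaarMeasure]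

theorem integrable_indicator_lt_mul_norm_rpow_neg (C : ℝ) {a : ℝ} (ha : 0 ≤ a)
    (hlt : a < Module.finrank ℝ E) :
    Integrable ({z : E | |C| < ‖C * ‖z‖ ^ (-a)‖}.indicator fun z => C * ‖z‖ ^ (-a)) μ := by
  have hmeas : Measurable fun z : E => C * ‖z‖ ^ (-a) := by fun_prop
  have hset : MeasurableSet {z : E | |C| < ‖C * ‖z‖ ^ (-a)‖} :=
    measurableSet_lt measurable_const hmeas.norm
  have hball : {z : E | |C| < ‖C * ‖z‖ ^ (-a)‖} ⊆ Metric.ball 0 1 := by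
    intro z hz
    rw [mem_ball_zero_iff]
    contrapose! hz
    have hone : ‖z‖ ^ (-a) ≤ 1 := Real.rpow_le_one_of_one_le_of_nonpos hz (neg_nonpos.2 ha)
    simpa [abs_of_nonneg (Real.rpow_nonneg (norm_nonneg z) (-a))] using
      mul_le_of_le_one_right (abs_nonneg C) hone
  have hlocal : IntegrableOn (fun z : E => C * ‖z‖ ^ (-a)) (Metric.ball 0 1) μ := by
    refine integrableOn_ball_of_norm_le_rpow (C := |C|) ?_ hlt (.of_forall fun z => ?_)
      hmeas.aestronglyMeasurable
    · exact_mod_cast ha.trans_lt hlt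
    · rw [norm_mul, Real.norm_eq_abs, Real.norm_of_nonneg (by positivity)]
  exact (integrable_indicator_iff hset).2 (hlocal.mono_set hball)

theorem weakly_singular_kernel_compact_general {𝕜 : Type*} [RCLike 𝕜] {Ω : Set E}
    (hΩ : NullMeasurableSet Ω μ) (hΩfin : μ Ω ≠ ∞) {k : E × E → 𝕜}
    (hkmeas : AEStronglyMeasurable k ((μ.restrict Ω).prod (μ.restrict Ω))) {C a : ℝ} (ha : 0 ≤ a)
    (hlt : a < Module.finrank ℝ E)
    (hk : ∀ x ∈ Ω, ∀ y ∈ Ω, x ≠ y → ‖k (x, y)‖ ≤ C * ‖x - y‖ ^ (-a)) :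
    ∃ Φ : Lp 𝕜 2 (μ.restrict Ω) →L[𝕜] Lp 𝕜 2 (μ.restrict Ω),
      IsCompactOperator Φ ∧ IsIntegralOperator k Φ := by
  have : Nontrivial E :=
    Module.nontrivial_of_finrank_pos (R := ℝ) (by exact_mod_cast ha.trans_lt hlt)
  have : IsFiniteMeasure (μ.restrict Ω) := isFiniteMeasure_restrict.2 hΩfin
  refine exists_isCompactOperator_isIntegralOperator_of_norm_le_sub (μ := μ)
    Measure.restrict_le_self Measure.restrict_le_self hkmeas ?_
    (integrable_indicator_lt_mul_norm_rpow_neg μ C ha hlt)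
  filter_upwards [Measure.quasiMeasurePreserving_fst.ae (ae_restrict_mem₀ hΩ),
    Measure.quasiMeasurePreserving_snd.ae (ae_restrict_mem₀ hΩ),
    ae_prod_fst_ne_snd (μ.restrict Ω) (μ.restrict Ω)] with p hx hy hne
  exact (hk p.1 hx p.2 hy hne).trans (le_abs_self _)

end RieszKernel

/-- Weakly singular integral operators are compact: if `Ω ⊆ ℝⁿ` (`n ≥ 2`) is bounded
and measurable and `k` is a measurable kernel with `|k(x,y)| ≤ C ‖x-y‖^{1-n}` on
`Ω × Ω`, then `Φf(x) = ∫_Ω k(x,y) f(y) dy` is a well-defined compact operator on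
`L²(Ω)`. -/
theorem weakly_singular_kernel_compact
    (n : ℕ) (hn : 2 ≤ n) (Ω : Set (EuclideanSpace ℝ (Fin n)))
    (hΩmeas : MeasurableSet Ω) (hΩbdd : Bornology.IsBounded Ω)
    (k : EuclideanSpace ℝ (Fin n) × EuclideanSpace ℝ (Fin n) → ℂ)
    (hkmeas : Measurable k) (C : ℝ) (hC : 0 < C)
    (hk : ∀ x ∈ Ω, ∀ y ∈ Ω, x ≠ y → ‖k (x, y)‖ ≤ C * ‖x - y‖ ^ ((1 : ℝ) - n)) :
    ∃ Φ : Lp ℂ 2 (volume.restrict Ω) →L[ℂ] Lp ℂ 2 (volume.restrict Ω),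
      IsCompactOperator Φ ∧
      (∀ f : Lp ℂ 2 (volume.restrict Ω),
        ∀ᵐ x ∂(volume.restrict Ω),
          Integrable (fun y => k (x, y) * f y) (volume.restrict Ω)) ∧
      ∀ f : Lp ℂ 2 (volume.restrict Ω),
        (Φ f : EuclideanSpace ℝ (Fin n) → ℂ) =ᵐ[volume.restrict Ω]
          fun x => ∫ y, k (x, y) * f y ∂(volume.restrict Ω) := by
  obtain ⟨Φ, hcompact, hΦ⟩ := weakly_singular_kernel_compact_general volume
    hΩmeas.nullMeasurableSet hΩbdd.measure_lt_top.ne hkmeas.aestronglyMeasurable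
    (a := n - 1) (by simp; omega) (by simp) (by simpa only [neg_sub] using hk)
  exact ⟨Φ, hcompact, hΦ.ae_integrable, hΦ.apply_ae_eq⟩
end

section
/- Let H be a complex Hilbert space and A a bounded linear operator on H such that A² = A ∘ A is a compact operator. Then the set S := {λ ∈ ℂ : Id − λA is not boundedly invertible} has no accumulation point in ℂ. In particular, 0 ∉ S, Id − λA is boundedly invertible for all λ in a neighborhood of 0, and S is at most countable. -/
open Filter Topology

/-!
If `1 - l • A` is not invertible, then `l ≠ 0` and `l⁻¹` lies in the spectrum of `A`, so a power
of `l⁻¹` lies in the spectrum of the corresponding power of `A`, which is compact. Hence it is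
enough that a compact operator `K` has only finitely many spectral values of modulus at least
`ε > 0`; by the Fredholm alternative these are eigenvalues.

Suppose there were infinitely many such eigenvalues `μ₀, μ₁, …`. The closed `K`-invariant subspaces
`Vₙ = ker ∏_{i < n} (K - μᵢ)` increase strictly, and `K - μₙ` maps `Vₙ₊₁` into `Vₙ`. By Riesz's
lemma, choose `xₙ ∈ Vₙ₊₁` of bounded norm and at distance at least `1` from `Vₙ`. For `m < n` the
vector `K xₙ - K xₘ` differs from `μₙ xₙ` by an element of `Vₙ`, so its norm is at least `‖μₙ‖ ≥ ε`,
contradicting the compactness of `K`.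
-/

open Module End Bornology

/-- The increasing sequence of subspaces `ker ∏_{i < n} (K - μ i)`, in which `K` is upper triangular
with diagonal `μ`. Taking the kernels one factor at a time keeps invariance and closedness simple
inductions. -/
def spectralFlag {R M : Type*} [CommRing R] [AddCommGroup M] [Module R M] (K : End R M)
    (μ : ℕ → R) : ℕ → Submodule R M
  | 0 => ⊥
  | n + 1 => (spectralFlag K μ n).comap (K - μ n • 1)

namespace spectralFlag

section CommRing

variable {R M : Type*} [CommRing R] [AddCommGroup M] [Module R M] {K : End R M} {μ : ℕ → R}

lemma mem_succ_iff {n : ℕ} {x : M} :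
    x ∈ spectralFlag K μ (n + 1) ↔ K x - μ n • x ∈ spectralFlag K μ n :=
  Iff.rfl

lemma apply_mem {n : ℕ} {x : M} (hx : x ∈ spectralFlag K μ n) : K x ∈ spectralFlag K μ n := by
  induction n generalizing x with
  | zero =>
    obtain rfl : x = 0 := hx
    simp
  | succ n ih =>
    rw [mem_succ_iff, ← map_smul, ← map_sub]
    exact ih (mem_succ_iff.mp hx)

lemma monotone : Monotone (spectralFlag K μ) :=
  monotone_nat_of_le_succ fun _ _ hx =>
    mem_succ_iff.mpr (sub_mem (apply_mem hx) (Submodule.smul_mem _ _ hx))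

lemma isClosed [TopologicalSpace M] [T1Space M] [ContinuousSub M] [ContinuousConstSMul R M]
    (hK : Continuous K) (n : ℕ) : IsClosed (spectralFlag K μ n : Set M) := by
  induction n with
  | zero => exact isClosed_singleton
  | succ n ih => exact ih.preimage (hK.sub (continuous_id.const_smul (μ n)))

lemma eigenvector_mem_succ {n : ℕ} {v : M} (hv : HasEigenvector K (μ n) v) :
    v ∈ spectralFlag K μ (n + 1) := by
  rw [mem_succ_iff, hv.apply_eq_smul, sub_self]
  exact zero_mem _

end CommRing

lemma eigenvector_notMem {F M : Type*} [Field F] [AddCommGroup M] [Module F M] {K : End F M}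
    {μ : ℕ → F} (hμ : Function.Injective μ) {n k : ℕ} (hnk : n ≤ k) {v : M}
    (hv : HasEigenvector K (μ k) v) : v ∉ spectralFlag K μ n := by
  induction n with
  | zero => exact hv.2
  | succ n ih =>
    have hsub : μ k - μ n ≠ 0 := sub_ne_zero.mpr (hμ.ne (by lia))
    rw [mem_succ_iff, hv.apply_eq_smul, ← sub_smul, Submodule.smul_mem_iff _ hsub]
    exact ih (by lia)

end spectralFlag

section NormedSpace

variable {𝕜 X : Type*} [NontriviallyNormedField 𝕜] [NormedAddCommGroup X] [NormedSpace 𝕜 X]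

lemma exists_mem_norm_le_forall_one_le_norm_sub {V W : Submodule 𝕜 X} (hV : IsClosed (V : Set X))
    (hWV : ¬ W ≤ V) {c : 𝕜} (hc : 1 < ‖c‖) {R : ℝ} (hR : ‖c‖ < R) :
    ∃ x ∈ W, ‖x‖ ≤ R ∧ ∀ y ∈ W ⊓ V, 1 ≤ ‖x - y‖ := by
  obtain ⟨w, hwW, hwV⟩ := SetLike.not_le_iff_exists.mp hWV
  obtain ⟨x, hxR, hxV⟩ := riesz_lemma_of_norm_lt hc hR (F := V.comap W.subtype)
    (hV.preimage continuous_subtype_val) ⟨⟨w, hwW⟩, hwV⟩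
  exact ⟨x, x.2, hxR, fun y hy => hxV ⟨y, hy.1⟩ hy.2⟩

lemma norm_le_norm_map_sub_map_of_mem_spectralFlag {K : End 𝕜 X} {μ : ℕ → 𝕜} {m n : ℕ}
    (hmn : m < n) (hμ : μ n ≠ 0) {x z : X} (hx : x ∈ spectralFlag K μ (n + 1))
    (hxV : ∀ y ∈ spectralFlag K μ n, 1 ≤ ‖x - y‖) (hz : z ∈ spectralFlag K μ (m + 1)) :
    ‖μ n‖ ≤ ‖K x - K z‖ := by
  set u : X := (μ n)⁻¹ • (K z - (K x - μ n • x)) with hu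
  have hKz : K z ∈ spectralFlag K μ n := spectralFlag.monotone hmn (spectralFlag.apply_mem hz)
  have hu_mem : u ∈ spectralFlag K μ n :=
    Submodule.smul_mem _ _ (sub_mem hKz (spectralFlag.mem_succ_iff.mp hx))
  calc ‖μ n‖ ≤ ‖μ n‖ * ‖x - u‖ := le_mul_of_one_le_right (norm_nonneg _) (hxV u hu_mem)
    _ = ‖μ n • (x - u)‖ := (norm_smul _ _).symm
    _ = ‖K x - K z‖ := by
      rw [smul_sub, hu, smul_inv_smul₀ hμ]
      congr 1
      abel

lemma exists_lt_norm_map_sub_map_lt {K : X →L[𝕜] X} (hK : IsCompactOperator K) {x : ℕ → X} {R : ℝ}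
    (hx : ∀ n, ‖x n‖ ≤ R) {ε : ℝ} (hε : 0 < ε) : ∃ m n, m < n ∧ ‖K (x n) - K (x m)‖ < ε := by
  obtain ⟨C, hC, hKC⟩ := hK.image_closedBall_subset_compact R
  obtain ⟨_, -, ψ, hψ, hlim⟩ := hC.tendsto_subseq (x := fun n => K (x n))
    fun n => hKC ⟨x n, by simpa using hx n, rfl⟩
  obtain ⟨N, hN⟩ := Metric.cauchySeq_iff'.mp hlim.cauchySeq ε hε
  exact ⟨ψ N, ψ (N + 1), hψ N.lt_succ_self, by simpa [dist_eq_norm] using hN (N + 1) N.le_succ⟩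

lemma finite_eigenvalues_norm_ge {K : X →L[𝕜] X} (hK : IsCompactOperator K) {ε : ℝ} (hε : 0 < ε) :
    {μ : 𝕜 | HasEigenvalue (K : End 𝕜 X) μ ∧ ε ≤ ‖μ‖}.Finite := by
  by_contra hinf
  let e := Set.Infinite.natEmbedding _ hinf
  let μ : ℕ → 𝕜 := fun n => e n
  have hμ_inj : Function.Injective μ := Subtype.val_injective.comp e.injective
  have hμ_norm (n : ℕ) : ε ≤ ‖μ n‖ := (e n).2.2
  choose v hv using fun n => (e n).2.1.exists_hasEigenvector
  let V := spectralFlag (K : End 𝕜 X) μ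
  have hV_lt (n : ℕ) : ¬ V (n + 1) ≤ V n := fun hle =>
    spectralFlag.eigenvector_notMem hμ_inj le_rfl (hv n)
      (hle (spectralFlag.eigenvector_mem_succ (hv n)))
  obtain ⟨c, hc⟩ := NormedField.exists_one_lt_norm 𝕜
  choose x hxV hxR hx_far using fun n =>
    exists_mem_norm_le_forall_one_le_norm_sub (spectralFlag.isClosed K.continuous n) (hV_lt n) hc
      (lt_add_one ‖c‖)
  obtain ⟨m, n, hmn, hlt⟩ := exists_lt_norm_map_sub_map_lt hK hxR hε
  have hsep : ‖μ n‖ ≤ ‖K (x n) - K (x m)‖ :=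
    norm_le_norm_map_sub_map_of_mem_spectralFlag hmn (norm_pos_iff.mp (hε.trans_le (hμ_norm n)))
      (hxV n) (fun y hy => hx_far n y ⟨spectralFlag.monotone n.le_succ hy, hy⟩) (hxV m)
  exact hlt.not_ge ((hμ_norm n).trans hsep)

lemma finite_spectrum_norm_ge [CompleteSpace X] {K : X →L[𝕜] X} (hK : IsCompactOperator K) {ε : ℝ}
    (hε : 0 < ε) : {μ ∈ spectrum 𝕜 K | ε ≤ ‖μ‖}.Finite :=
  (finite_eigenvalues_norm_ge hK hε).subset fun _ hμ =>
    ⟨(hK.hasEigenvalue_iff_mem_spectrum (norm_pos_iff.mp (hε.trans_le hμ.2))).mpr hμ.1, hμ.2⟩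

end NormedSpace

lemma finite_preimage_pow {R : Type*} [CommRing R] [IsDomain R] {n : ℕ} (hn : n ≠ 0) {s : Set R}
    (hs : s.Finite) : ((· ^ n) ⁻¹' s : Set R).Finite := by
  classical
  refine hs.preimage' fun a _ =>
    (Polynomial.nthRoots n a).toFinset.finite_toSet.subset fun x hx => ?_
  rw [Finset.mem_coe, Multiset.mem_toFinset, Polynomial.mem_nthRoots (Nat.pos_of_ne_zero hn)]
  exact hx

lemma not_isUnit_one_sub_smul_iff {F A : Type*} [Field F] [Ring A] [Algebra F A] {a : A} {l : F} :
    ¬ IsUnit (1 - l • a) ↔ l ≠ 0 ∧ l⁻¹ ∈ spectrum F a := by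
  rcases eq_or_ne l 0 with rfl | hl
  · simp
  · have hmem : l * l⁻¹ ∈ spectrum F (l • a) ↔ l⁻¹ ∈ spectrum F a :=
      spectrum.smul_mem_smul_iff (r := Units.mk0 l hl)
    rw [← hmem, mul_inv_cancel₀ hl, spectrum.mem_iff, map_one, and_iff_right hl]

section CompactPower

variable {𝕜 X : Type*} [NontriviallyNormedField 𝕜] [NormedAddCommGroup X] [NormedSpace 𝕜 X]
  [CompleteSpace X]

lemma finite_spectrum_norm_ge_of_pow {A : X →L[𝕜] X} {n : ℕ} (hA : IsCompactOperator (A ^ n))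
    {ε : ℝ} (hε : 0 < ε) : {μ ∈ spectrum 𝕜 A | ε ≤ ‖μ‖}.Finite := by
  -- Raising the exponent makes it nonzero, so that `μ ↦ μ ^ (n + 1)` has finite fibres.
  have hA_succ : IsCompactOperator (A ^ (n + 1)) := by
    rw [pow_succ]
    exact hA.comp_clm A
  refine (finite_preimage_pow n.succ_ne_zero
    (finite_spectrum_norm_ge hA_succ (pow_pos hε (n + 1)))).subset ?_
  rintro μ ⟨hμ, hεμ⟩
  refine ⟨spectrum.pow_mem_pow A (n + 1) hμ, ?_⟩
  rw [norm_pow]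
  gcongr

lemma finite_not_isUnit_one_sub_smul_inter {A : X →L[𝕜] X} {n : ℕ}
    (hA : IsCompactOperator (A ^ n)) {B : Set 𝕜} (hB : IsBounded B) :
    ({l : 𝕜 | ¬ IsUnit (1 - l • A)} ∩ B).Finite := by
  obtain ⟨R, hR, hBR⟩ := hB.exists_pos_norm_le
  refine ((finite_spectrum_norm_ge_of_pow hA (inv_pos.mpr hR)).preimage
    inv_injective.injOn).subset ?_
  rintro l ⟨hl, hlB⟩
  obtain ⟨hl_ne, hl_spec⟩ := not_isUnit_one_sub_smul_iff.mp hl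
  refine ⟨hl_spec, ?_⟩
  rw [norm_inv]
  exact inv_anti₀ (norm_pos_iff.mpr hl_ne) (hBR l hlB)

end CompactPower

lemma exists_mem_nhds_inter_subset_singleton {Y : Type*} [TopologicalSpace Y] [T1Space Y]
    {s U : Set Y} {y : Y} (hU : U ∈ 𝓝 y) (hs : (s ∩ U).Finite) : ∃ W ∈ 𝓝 y, W ∩ s ⊆ {y} := by
  have hacc : ¬ AccPt y (𝓟 s) := fun h =>
    Set.Infinite.of_accPt (h.nhds_inter hU) (Set.inter_comm s U ▸ hs)
  rw [accPt_iff_nhds] at hacc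
  push Not at hacc
  exact hacc

theorem resolvent_set_discrete_of_sq_compact_general
    {𝕜 X : Type*} [NontriviallyNormedField 𝕜] [NormedAddCommGroup X] [NormedSpace 𝕜 X]
    [CompleteSpace X] (A : X →L[𝕜] X) {n : ℕ} (hA : IsCompactOperator (A ^ n)) :
    (∀ z : 𝕜, ∃ U ∈ 𝓝 z, U ∩ {l : 𝕜 | ¬ IsUnit (1 - l • A)} ⊆ {z}) ∧
    (0 : 𝕜) ∉ {l : 𝕜 | ¬ IsUnit (1 - l • A)} ∧
    (∀ᶠ l in 𝓝 (0 : 𝕜), IsUnit (1 - l • A)) ∧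
    Set.Countable {l : 𝕜 | ¬ IsUnit (1 - l • A)} := by
  have hfin {B : Set 𝕜} (hB : IsBounded B) := finite_not_isUnit_one_sub_smul_inter hA hB
  have hzero : IsUnit (1 - (0 : 𝕜) • A) := by simp
  refine ⟨fun z => ?_, not_not_intro hzero, ?_, ?_⟩
  · exact exists_mem_nhds_inter_subset_singleton (Metric.ball_mem_nhds z one_pos)
      (hfin Metric.isBounded_ball)
  · have hcont : ContinuousAt (fun l : 𝕜 => 1 - l • A) 0 := by fun_prop
    exact hcont.eventually (Units.isOpen.mem_nhds hzero)
  · rw [← Metric.iUnion_inter_closedBall_nat {l : 𝕜 | ¬ IsUnit (1 - l • A)} 0]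
    exact Set.countable_iUnion fun _ => (hfin Metric.isBounded_closedBall).countable

/-- If `A` is a bounded operator on a complex Hilbert space with `A²` compact, then the
set `S` of `λ ∈ ℂ` for which `Id - λA` is not invertible has no accumulation point in
`ℂ`; in particular `0 ∉ S`, `Id - λA` is invertible for all `λ` near `0`, and `S` is at
most countable. -/
theorem resolvent_set_discrete_of_sq_compact
    {H : Type*} [NormedAddCommGroup H] [InnerProductSpace ℂ H] [CompleteSpace H]
    (A : H →L[ℂ] H) (hA : IsCompactOperator (A * A)) :
    (∀ z : ℂ, ∃ U ∈ 𝓝 z, U ∩ {l : ℂ | ¬ IsUnit (1 - l • A)} ⊆ {z}) ∧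
    (0 : ℂ) ∉ {l : ℂ | ¬ IsUnit (1 - l • A)} ∧
    (∀ᶠ l in 𝓝 (0 : ℂ), IsUnit (1 - l • A)) ∧
    Set.Countable {l : ℂ | ¬ IsUnit (1 - l • A)} := by
  exact resolvent_set_discrete_of_sq_compact_general A (n := 2) (by rwa [pow_two])
end
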